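/- arXiv:2506.05282 — 4 statements merged into one kernel-verified Lean document; each statement's English description precedes it below -/
import Mathlib

section
/- Let (Ω, μ) be a measure space, T : Ω ≃ Ω a measurable equivalence that preserves μ (the pushforward of μ under T equals μ), R a linear isometric equivalence of the Euclidean space ℝ^n, and f : Ω → ℝ^n a measurable map satisfying f(T ω) = R(f ω) for μ-almost every ω. Then for every measurable V : Ω → ℝ^n, the conditional flow matching loss is invariant under the conjugated action: ∫ ‖R(V(T⁻¹ ω)) − f(ω)‖² dμ(ω) = ∫ ‖V(ω) − f(ω)‖² dμ(ω). -/
open MeasureTheory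

section ConditionalFlowMatching

variable {Ω Ω' E F : Type*}

/-- The conjugated action of a pair `(R, T)` on velocity fields, for a transformation `R` of the
values and a reparametrization `T` of the sample space. The fields before and after the action may
live on different spaces. -/
def conjugateField (R : E → F) (T : Ω ≃ Ω') (V : Ω → E) : Ω' → F :=
  fun ω => R (V (T.symm ω))

theorem conjugateField_comp (R : E → F) (T : Ω ≃ Ω') (V : Ω → E) :
    conjugateField R T V ∘ T = R ∘ V := by
  funext ω
  simp only [conjugateField, Function.comp_apply, Equiv.symm_apply_apply]

variable [MeasurableSpace Ω] [MeasurableSpace Ω'] {μ : Measure Ω} {ν : Measure Ω'}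
  [SeminormedAddCommGroup E] [SeminormedAddCommGroup F]

/-- The conditional flow matching loss of the velocity field `V` against the target field `f`.
Being a Bochner integral, it is `0` when the squared deviation is not integrable. -/
noncomputable def cfmLoss (μ : Measure Ω) (f V : Ω → E) : ℝ :=
  ∫ ω, ‖V ω - f ω‖ ^ 2 ∂μ

theorem cfmLoss_congr_target {f g : Ω → E} (hfg : f =ᵐ[μ] g) (V : Ω → E) :
    cfmLoss μ f V = cfmLoss μ g V :=
  integral_congr_ae <| hfg.mono fun ω hω => by simp only [hω]

theorem cfmLoss_isometry_comp {R : E → F} (hR : Isometry R) (f V : Ω → E) :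
    cfmLoss μ (R ∘ f) (R ∘ V) = cfmLoss μ f V := by
  simp only [cfmLoss, Function.comp_apply, ← dist_eq_norm, hR.dist_eq]

theorem cfmLoss_comp_measurePreserving {T : Ω → Ω'} (hT : MeasurePreserving T μ ν)
    (hT_emb : MeasurableEmbedding T) (f V : Ω' → E) :
    cfmLoss μ (f ∘ T) (V ∘ T) = cfmLoss ν f V :=
  hT.integral_comp hT_emb fun ω => ‖V ω - f ω‖ ^ 2

theorem cfm_loss_invariant_general {T : Ω ≃ᵐ Ω'} (hT : MeasurePreserving T μ ν)
    {R : E → F} (hR : Isometry R) {f : Ω → E} {g : Ω' → F}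
    (hequiv : g ∘ T =ᵐ[μ] R ∘ f) (V : Ω → E) :
    cfmLoss ν g (conjugateField R T V) = cfmLoss μ f V :=
  calc cfmLoss ν g (conjugateField R T V)
    _ = cfmLoss μ (g ∘ T) (conjugateField R T V ∘ T) :=
        (cfmLoss_comp_measurePreserving hT T.measurableEmbedding _ _).symm
    _ = cfmLoss μ (g ∘ T) (R ∘ V) := congrArg _ (conjugateField_comp R T.toEquiv V)
    _ = cfmLoss μ (R ∘ f) (R ∘ V) := cfmLoss_congr_target hequiv _
    _ = cfmLoss μ f V := cfmLoss_isometry_comp hR f V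

end ConditionalFlowMatching

/-- **G-invariance of the conditional flow matching loss** (single group element).
If `T` is a measure-preserving measurable equivalence of the sample space, `R` a linear
isometric equivalence of Euclidean space, and the target field `f` is equivariant
(`f (T ω) = R (f ω)` a.e.), then the CFM loss of the conjugated field
`ω ↦ R (V (T⁻¹ ω))` equals that of `V`. -/
theorem cfm_loss_invariant {Ω : Type*} [MeasurableSpace Ω] (μ : Measure Ω) (n : ℕ)
    (T : Ω ≃ᵐ Ω) (hT : μ.map T = μ)
    (R : EuclideanSpace ℝ (Fin n) ≃ₗᵢ[ℝ] EuclideanSpace ℝ (Fin n))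
    (f : Ω → EuclideanSpace ℝ (Fin n)) (hf : Measurable f)
    (hequiv : ∀ᵐ ω ∂μ, f (T ω) = R (f ω))
    (V : Ω → EuclideanSpace ℝ (Fin n)) (hV : Measurable V) :
    ∫ ω, ‖R (V (T.symm ω)) - f ω‖ ^ 2 ∂μ = ∫ ω, ‖V ω - f ω‖ ^ 2 ∂μ :=
  cfm_loss_invariant_general ⟨T.measurable, hT⟩ R.isometry hequiv V
end

section
/- Fix H ∈ ℕ and, for each i ∈ Fin H, a measure μ_i on a common measurable space Ω, a weight w_i ≥ 0, a measurable target field f_i : Ω → ℝ^n, and a linear isometric equivalence R_i of ℝ^n; let σ be a permutation of Fin H. Assume for every i: (a) w_{σ(i)} = w_i; (b) μ_{σ(i)} = μ_i; and (c) f_{σ(i)}(ω) = R_{σ(i)}(f_i(ω)) for μ_i-almost every ω. Then for every family of measurable fields V_i : Ω → ℝ^n, the weighted conditional flow matching loss is invariant under the assembly symmetry action: Σ_{i} w_i ∫ ‖R_i(V_{σ⁻¹(i)}(ω)) − f_i(ω)‖² dμ_i(ω) = Σ_{i} w_i ∫ ‖V_i(ω) − f_i(ω)‖² dμ_i(ω).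 -/
open MeasureTheory

/-!
Let `g = (R_1, …, R_H, σ)` act on the targets as well as on the velocity fields. The summand at
`σ i` then compares `R_{σ i} ∘ V_i` with `R_{σ i} ∘ f_i`, which is the original summand at `i`
because `R_{σ i}` preserves distances; so the loss is invariant under the simultaneous action.
Equivariance of the targets says that `g` fixes `f` almost everywhere, so `g` may be dropped from
the targets.
-/

section AssemblyAction

variable {ι Ω E : Type*}

/-- The action `(g·V)_i = R_i ∘ V_{σ⁻¹ i}` of an assembly symmetry `g = (R, σ)` on families of
fields. The `R i` are arbitrary self-maps of `E`, so that rigid motions are covered as well as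
rotations. -/
def assemblyAct (R : ι → E → E) (σ : Equiv.Perm ι) (V : ι → Ω → E) : ι → Ω → E :=
  fun i ω => R i (V (σ⁻¹ i) ω)

theorem assemblyAct_perm_apply (R : ι → E → E) (σ : Equiv.Perm ι) (V : ι → Ω → E) (i : ι) (ω : Ω) :
    assemblyAct R σ V (σ i) ω = R (σ i) (V i ω) := by
  simp [assemblyAct]

theorem ae_eq_assemblyAct [MeasurableSpace Ω] {μ : ι → Measure Ω} {R : ι → E → E}
    {σ : Equiv.Perm ι} {f : ι → Ω → E} (hμσ : ∀ i, μ (σ i) = μ i)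
    (hfσ : ∀ i, ∀ᵐ ω ∂(μ i), f (σ i) ω = R (σ i) (f i ω)) (i : ι) :
    f i =ᵐ[μ i] assemblyAct R σ f i := by
  obtain ⟨j, rfl⟩ := σ.surjective i
  rw [hμσ]
  filter_upwards [hfσ j] with ω hω
  rw [hω, assemblyAct_perm_apply]

end AssemblyAction

section CFMLoss

variable {ι Ω E : Type*} [Fintype ι] [MeasurableSpace Ω] [PseudoMetricSpace E]
  {μ : ι → Measure Ω} {w : ι → ℝ} {R : ι → E → E} {σ : Equiv.Perm ι}

/-- The weighted conditional flow matching loss of the fields `V` against the targets `f`. It is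
stated with the distance, which is the norm of the difference in a normed space. The integral is
Bochner's: a part whose squared error is not integrable contributes `0`. -/
noncomputable def weightedCFMLoss (μ : ι → Measure Ω) (w : ι → ℝ) (f V : ι → Ω → E) : ℝ :=
  ∑ i, w i * ∫ ω, dist (V i ω) (f i ω) ^ 2 ∂(μ i)

theorem weightedCFMLoss_congr_target_ae {f f' : ι → Ω → E} (h : ∀ i, f i =ᵐ[μ i] f' i)
    (V : ι → Ω → E) : weightedCFMLoss μ w f V = weightedCFMLoss μ w f' V := by
  refine Finset.sum_congr rfl fun i _ => congrArg (w i * ·) (integral_congr_ae ?_)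
  filter_upwards [h i] with ω hω
  rw [hω]

theorem weightedCFMLoss_assemblyAct_assemblyAct (hR : ∀ i, Isometry (R i))
    (hwσ : ∀ i, w (σ i) = w i) (hμσ : ∀ i, μ (σ i) = μ i) (f V : ι → Ω → E) :
    weightedCFMLoss μ w (assemblyAct R σ f) (assemblyAct R σ V) = weightedCFMLoss μ w f V := by
  unfold weightedCFMLoss
  rw [← Equiv.sum_comp σ]
  simp only [assemblyAct_perm_apply, (hR _).dist_eq, hwσ, hμσ]

theorem multi_part_cfm_loss_invariant_general (hR : ∀ i, Isometry (R i))
    (hwσ : ∀ i, w (σ i) = w i) (hμσ : ∀ i, μ (σ i) = μ i) {f : ι → Ω → E}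
    (hfσ : ∀ i, ∀ᵐ ω ∂(μ i), f (σ i) ω = R (σ i) (f i ω)) (V : ι → Ω → E) :
    weightedCFMLoss μ w f (assemblyAct R σ V) = weightedCFMLoss μ w f V := by
  calc weightedCFMLoss μ w f (assemblyAct R σ V)
    _ = weightedCFMLoss μ w (assemblyAct R σ f) (assemblyAct R σ V) :=
      weightedCFMLoss_congr_target_ae (ae_eq_assemblyAct hμσ hfσ) _
    _ = weightedCFMLoss μ w f V := weightedCFMLoss_assemblyAct_assemblyAct hR hwσ hμσ f V

end CFMLoss

/-- **Multi-part G-invariance of the weighted conditional flow matching loss**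
(Theorem 1 of Rectified Point Flow). For an assembly symmetry group element
`g = (R_1, …, R_H, σ)` acting on a family of per-part velocity fields by
`(g·V)_i(ω) = R_i (V_{σ⁻¹ i} ω)`, the weighted CFM loss is invariant, provided the
weights and sample measures are `σ`-invariant and the target fields are equivariant. -/
theorem multi_part_cfm_loss_invariant {Ω : Type*} [MeasurableSpace Ω] (n H : ℕ)
    (μ : Fin H → Measure Ω) (w : Fin H → ℝ) (hw : ∀ i, 0 ≤ w i)
    (f : Fin H → Ω → EuclideanSpace ℝ (Fin n)) (hf : ∀ i, Measurable (f i))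
    (R : Fin H → (EuclideanSpace ℝ (Fin n) ≃ₗᵢ[ℝ] EuclideanSpace ℝ (Fin n)))
    (σ : Equiv.Perm (Fin H))
    (hwσ : ∀ i, w (σ i) = w i)
    (hμσ : ∀ i, μ (σ i) = μ i)
    (hfσ : ∀ i, ∀ᵐ ω ∂(μ i), f (σ i) ω = R (σ i) (f i ω))
    (V : Fin H → Ω → EuclideanSpace ℝ (Fin n)) (hV : ∀ i, Measurable (V i)) :
    ∑ i, w i * ∫ ω, ‖R i (V (σ⁻¹ i) ω) - f i ω‖ ^ 2 ∂(μ i)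
      = ∑ i, w i * ∫ ω, ‖V i ω - f i ω‖ ^ 2 ∂(μ i) := by
  simpa only [weightedCFMLoss, assemblyAct, dist_eq_norm] using
    multi_part_cfm_loss_invariant_general (fun i => (R i).isometry) hwσ hμσ hfσ V
end

section
/- Let μ and ν be probability measures on ℝ^n (with the Borel σ-algebra), and let R be a linear isometric equivalence of ℝ^n such that the pushforward of μ under R equals μ and the pushforward of ν under R equals ν. Define the path map Ψ : ℝ^n × ℝ^n → (ℝ → ℝ^n) by Ψ(x, y) = (t ↦ (1 − t)·x + t·y), where ℝ → ℝ^n carries the product (pointwise) σ-algebra, and define the pointwise action R̂ : (ℝ → ℝ^n) → (ℝ → ℝ^n) by R̂(γ) = R ∘ γ. Then the law of the whole flow path is invariant: ((μ ⊗ ν).map Ψ).map R̂ = (μ ⊗ ν).map Ψ. -/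
open MeasureTheory

/-!
The straight-line path is an affine function of its pair of endpoints, so applying an affine map
to it pointwise amounts to applying that map to both endpoints. Hence the law of the path is
invariant as soon as the joint law of the endpoints is, and for independent endpoints the latter
follows from the invariance of the two marginals.
-/

section FlowPath

variable {𝕜 E F : Type*} [Ring 𝕜] [AddCommGroup E] [Module 𝕜 E] [AddCommGroup F] [Module 𝕜 F]

variable (𝕜) in
/-- The realization of the rectified flow with endpoints `p = (x, y)`, as a path defined for all
times in `𝕜`, not only those between `0` and `1`. -/
def flowPath (p : E × E) : 𝕜 → E :=
  fun t ↦ (1 - t) • p.1 + t • p.2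

theorem affineMap_comp_flowPath (f : E →ᵃ[𝕜] F) (p : E × E) :
    f ∘ flowPath 𝕜 p = flowPath 𝕜 (Prod.map f f p) := by
  funext t
  simpa only [flowPath, Function.comp_apply, Prod.map_fst, Prod.map_snd,
    AffineMap.lineMap_apply_module] using f.apply_lineMap p.1 p.2 t

variable [MeasurableSpace E] [MeasurableAdd₂ E] [MeasurableConstSMul 𝕜 E]
  [MeasurableSpace F] [MeasurableAdd₂ F] [MeasurableConstSMul 𝕜 F]

theorem measurable_flowPath : Measurable (flowPath 𝕜 : E × E → 𝕜 → E) :=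
  measurable_pi_lambda _ fun t ↦
    (measurable_fst.const_smul (1 - t)).add (measurable_snd.const_smul t)

theorem path_law_invariant_general {π : Measure (E × E)} {ρ : Measure (F × F)} (f : E →ᵃ[𝕜] F)
    (hπ : MeasurePreserving (Prod.map f f) π ρ) :
    MeasurePreserving (f ∘ ·) (π.map (flowPath 𝕜)) (ρ.map (flowPath 𝕜)) := by
  have hf : Measurable f := hπ.measurable.fst.comp (measurable_id.prodMk measurable_id)
  have hcomp : (f ∘ ·) ∘ flowPath 𝕜 = flowPath 𝕜 ∘ Prod.map f f :=
    funext (affineMap_comp_flowPath f)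
  have hpath : MeasurePreserving (flowPath 𝕜 ∘ Prod.map f f) π (ρ.map (flowPath 𝕜)) :=
    (measurable_flowPath.measurePreserving ρ).comp hπ
  exact (hcomp ▸ hpath).map_of_comp
    (measurable_pi_lambda _ fun t ↦ hf.comp (measurable_pi_apply t)) measurable_flowPath

end FlowPath

/-- **Path-space form of Lemma 1 (G-invariance of the flow distribution).**
The law of the whole straight-line flow path `t ↦ (1 − t)·x + t·y`, with independent
endpoints `x ∼ μ` and `y ∼ ν` whose laws are invariant under a rotation `R`, is itself
invariant under the pointwise action `γ ↦ R ∘ γ` (the path space `ℝ → ℝⁿ` carries the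
product σ-algebra). -/
theorem path_law_invariant (n : ℕ)
    (μ ν : Measure (EuclideanSpace ℝ (Fin n)))
    [IsProbabilityMeasure μ] [IsProbabilityMeasure ν]
    (R : EuclideanSpace ℝ (Fin n) ≃ₗᵢ[ℝ] EuclideanSpace ℝ (Fin n))
    (hμ : μ.map R = μ) (hν : ν.map R = ν) :
    (((μ.prod ν).map (fun p : EuclideanSpace ℝ (Fin n) × EuclideanSpace ℝ (Fin n) =>
          fun t : ℝ => (1 - t) • p.1 + t • p.2)).map
        (fun γ : ℝ → EuclideanSpace ℝ (Fin n) => fun t => R (γ t)))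
      = (μ.prod ν).map (fun p : EuclideanSpace ℝ (Fin n) × EuclideanSpace ℝ (Fin n) =>
          fun t : ℝ => (1 - t) • p.1 + t • p.2) := by
  have hR : Measurable R := R.continuous.measurable
  have hprod : MeasurePreserving (Prod.map R R) (μ.prod ν) (μ.prod ν) :=
    .prod ⟨hR, hμ⟩ ⟨hR, hν⟩
  exact (path_law_invariant_general R.toLinearEquiv.toLinearMap.toAffineMap hprod).map_eq
end

section
/- Let X* and X̂ be real 3 × N matrices with N ≥ 1, suppose the rows of X* each sum to zero (X* · 𝟙 = 0), suppose ‖X̂ − X*‖_F ≤ ε for some ε ≥ 0, and suppose s > 0 satisfies vᵀ (X*·X*ᵀ) v ≥ s·‖v‖² for every v ∈ ℝ³. Let (R̂, t̂) with R̂ a 3 × 3 real matrix satisfying R̂ᵀ·R̂ = I and det R̂ = 1, and t̂ ∈ ℝ³, be a minimizer of the Procrustes objective (R, t) ↦ ‖R·X̂ + t𝟙ᵀ − X*‖_F over all such pairs. Then ‖(R̂ − I)·X*‖_F² + N·‖t̂‖² ≤ 4ε², and consequently ‖R̂ − I‖_F ≤ 2ε/√s and ‖t̂‖ ≤ 2ε/√N.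 -/
open scoped Matrix

/-- The squared Frobenius norm of a real matrix: the sum of the squares of its entries. -/
def frobSq {m n : ℕ} (A : Matrix (Fin m) (Fin n) ℝ) : ℝ := ∑ i, ∑ j, (A i j) ^ 2

/-- The Frobenius norm of a real matrix. -/
noncomputable def frobNorm {m n : ℕ} (A : Matrix (Fin m) (Fin n) ℝ) : ℝ :=
  Real.sqrt (frobSq A)

/-!
The residual of the estimated pose decomposes as
`R̂X̂ + t̂𝟙ᵀ − X* = ((R̂ − I)X* + t̂𝟙ᵀ) + R̂(X̂ − X*)`. The identity pose has cost
`‖X̂ − X*‖_F ≤ ε`, so by minimality the residual has norm at most `ε`; the last term has norm at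
most `ε` because `R̂` is orthogonal. Hence `‖(R̂ − I)X* + t̂𝟙ᵀ‖_F ≤ 2ε`. As `X*` is centered,
these two summands are orthogonal, and the squared norm splits as
`‖(R̂ − I)X*‖_F² + N‖t̂‖²`; the Gram bound, applied to the rows of `R̂ − I`, gives
`s‖R̂ − I‖_F² ≤ ‖(R̂ − I)X*‖_F²`.
-/

theorem sqrt_le_div_sqrt {a b c : ℝ} (hb : 0 ≤ b) (hc : 0 < c) (h : c * a ≤ b ^ 2) :
    √a ≤ b / √c := by
  rw [le_div_iff₀ (Real.sqrt_pos.2 hc), mul_comm, ← Real.sqrt_mul hc.le]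
  exact Real.sqrt_le_iff.2 ⟨hb, h⟩

section Frobenius

variable {l m n : ℕ}

theorem frobSq_nonneg (A : Matrix (Fin m) (Fin n) ℝ) : 0 ≤ frobSq A :=
  Finset.sum_nonneg fun _ _ => Finset.sum_nonneg fun _ _ => sq_nonneg _

theorem frobNorm_nonneg (A : Matrix (Fin m) (Fin n) ℝ) : 0 ≤ frobNorm A :=
  Real.sqrt_nonneg _

theorem frobNorm_sq (A : Matrix (Fin m) (Fin n) ℝ) : frobNorm A ^ 2 = frobSq A :=
  Real.sq_sqrt (frobSq_nonneg A)

open scoped Matrix.Norms.Frobenius in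
theorem frobNorm_eq_norm (A : Matrix (Fin m) (Fin n) ℝ) : frobNorm A = ‖A‖ := by
  simp only [frobNorm, frobSq, Matrix.frobenius_norm_def, Real.sqrt_eq_rpow, Real.rpow_two,
    Real.norm_eq_abs, sq_abs]

open scoped Matrix.Norms.Frobenius in
theorem frobNorm_sub_le (A B : Matrix (Fin m) (Fin n) ℝ) :
    frobNorm (A - B) ≤ frobNorm A + frobNorm B := by
  simpa only [frobNorm_eq_norm] using norm_sub_le A B

theorem frobSq_eq_trace (A : Matrix (Fin m) (Fin n) ℝ) : frobSq A = (Aᵀ * A).trace := by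
  simp only [frobSq, Matrix.trace, Matrix.diag, Matrix.mul_apply, Matrix.transpose_apply, ← sq]
  exact Finset.sum_comm

theorem frobNorm_mul_of_transpose_mul_self_eq_one {R : Matrix (Fin l) (Fin m) ℝ}
    (hR : Rᵀ * R = 1) (A : Matrix (Fin m) (Fin n) ℝ) : frobNorm (R * A) = frobNorm A := by
  rw [frobNorm, frobNorm, frobSq_eq_trace, frobSq_eq_trace, Matrix.transpose_mul, Matrix.mul_assoc,
    ← Matrix.mul_assoc Rᵀ, hR, Matrix.one_mul]

theorem frobSq_add_replicateCol {A : Matrix (Fin m) (Fin n) ℝ} (hA : A *ᵥ 1 = 0)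
    (t : Fin m → ℝ) :
    frobSq (A + Matrix.replicateCol (Fin n) t) = frobSq A + n * ∑ i, t i ^ 2 := by
  have row_sum_eq_zero (i : Fin m) : ∑ j, A i j = 0 := by
    rw [← dotProduct_one]
    exact congrFun hA i
  simp only [frobSq, Finset.mul_sum, ← Finset.sum_add_distrib]
  refine Finset.sum_congr rfl fun i _ => ?_
  calc ∑ j, (A i j + t i) ^ 2
      = ∑ j, A i j ^ 2 + 2 * (∑ j, A i j) * t i + n * t i ^ 2 := by
        simp only [add_sq, Finset.sum_add_distrib, Finset.mul_sum, Finset.sum_mul,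
          Finset.sum_const, Finset.card_univ, Fintype.card_fin, nsmul_eq_mul]
    _ = ∑ j, A i j ^ 2 + n * t i ^ 2 := by rw [row_sum_eq_zero, mul_zero, zero_mul, add_zero]

theorem mul_frobSq_le_frobSq_mul {X : Matrix (Fin m) (Fin n) ℝ} {s : ℝ}
    (hgram : ∀ v : Fin m → ℝ, s * ∑ i, v i ^ 2 ≤ v ⬝ᵥ (X * Xᵀ) *ᵥ v)
    (A : Matrix (Fin l) (Fin m) ℝ) : s * frobSq A ≤ frobSq (A * X) := by
  rw [frobSq, frobSq, Finset.mul_sum]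
  refine Finset.sum_le_sum fun i _ => ?_
  calc s * ∑ k, A i k ^ 2
      ≤ A i ⬝ᵥ (X * Xᵀ) *ᵥ A i := hgram (A i)
    _ = (A i ᵥ* X) ⬝ᵥ (A i ᵥ* X) := by
        rw [← Matrix.mulVec_mulVec, Matrix.dotProduct_mulVec, Matrix.mulVec_transpose]
    _ = ∑ j, (A * X) i j ^ 2 := by
        simp only [← Matrix.mul_apply_eq_vecMul, dotProduct, sq]

end Frobenius

section Procrustes

variable {d N : ℕ}

/-- The Procrustes cost `‖R·X + t𝟙ᵀ − Y‖_F` of the pose `(R, t)`, which is to carry the point cloud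
`X` onto `Y`; the points are the columns, and `R` is not required to be a rotation. -/
noncomputable def procrustesCost (X Y : Matrix (Fin d) (Fin N) ℝ)
    (R : Matrix (Fin d) (Fin d) ℝ) (t : Fin d → ℝ) : ℝ :=
  frobNorm (R * X + Matrix.replicateCol (Fin N) t - Y)

theorem procrustesCost_nonneg (X Y : Matrix (Fin d) (Fin N) ℝ) (R : Matrix (Fin d) (Fin d) ℝ)
    (t : Fin d → ℝ) : 0 ≤ procrustesCost X Y R t :=
  frobNorm_nonneg _

theorem procrustesCost_one_zero (X Y : Matrix (Fin d) (Fin N) ℝ) :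
    procrustesCost X Y 1 0 = frobNorm (X - Y) := by
  rw [procrustesCost, Matrix.one_mul, Matrix.replicateCol_zero, add_zero]

theorem frobNorm_sub_one_mul_add_replicateCol_le (X Y : Matrix (Fin d) (Fin N) ℝ)
    {R : Matrix (Fin d) (Fin d) ℝ} (hR : Rᵀ * R = 1) (t : Fin d → ℝ) :
    frobNorm ((R - 1) * Y + Matrix.replicateCol (Fin N) t)
      ≤ procrustesCost X Y R t + frobNorm (X - Y) := by
  have residual_sub : (R - 1) * Y + Matrix.replicateCol (Fin N) t
      = (R * X + Matrix.replicateCol (Fin N) t - Y) - R * (X - Y) := by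
    rw [Matrix.mul_sub, Matrix.sub_mul, Matrix.one_mul]
    abel
  rw [residual_sub, ← frobNorm_mul_of_transpose_mul_self_eq_one hR (X - Y)]
  exact frobNorm_sub_le _ _

theorem frobSq_sub_one_mul_add_le (X : Matrix (Fin d) (Fin N) ℝ) {Y : Matrix (Fin d) (Fin N) ℝ}
    (hY : Y *ᵥ 1 = 0) {R : Matrix (Fin d) (Fin d) ℝ} (hR : Rᵀ * R = 1) (t : Fin d → ℝ) :
    frobSq ((R - 1) * Y) + N * ∑ i, t i ^ 2
      ≤ (procrustesCost X Y R t + frobNorm (X - Y)) ^ 2 := by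
  have hcentered : ((R - 1) * Y) *ᵥ 1 = 0 := by
    rw [← Matrix.mulVec_mulVec, hY, Matrix.mulVec_zero]
  rw [← frobSq_add_replicateCol hcentered, ← frobNorm_sq]
  exact pow_le_pow_left₀ (frobNorm_nonneg _) (frobNorm_sub_one_mul_add_replicateCol_le X Y hR t) 2

theorem procrustes_lipschitz_contracting_general (hN : 1 ≤ N)
    {Xstar Xhat : Matrix (Fin d) (Fin N) ℝ} (hcentered : Xstar *ᵥ 1 = 0)
    {ε : ℝ} (hclose : frobNorm (Xhat - Xstar) ≤ ε)
    {s : ℝ} (hs : 0 < s)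
    (hgram : ∀ v : Fin d → ℝ, s * ∑ i, v i ^ 2 ≤ v ⬝ᵥ (Xstar * Xstarᵀ) *ᵥ v)
    {Rhat : Matrix (Fin d) (Fin d) ℝ} {that : Fin d → ℝ} (hRhat : Rhatᵀ * Rhat = 1)
    (hcost : procrustesCost Xhat Xstar Rhat that ≤ procrustesCost Xhat Xstar 1 0) :
    frobSq ((Rhat - 1) * Xstar) + N * ∑ i, that i ^ 2 ≤ 4 * ε ^ 2
      ∧ frobNorm (Rhat - 1) ≤ 2 * ε / √s
      ∧ √(∑ i, that i ^ 2) ≤ 2 * ε / √N := by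
  have hε : 0 ≤ 2 * ε := mul_nonneg zero_le_two ((frobNorm_nonneg _).trans hclose)
  have hN_pos : (0 : ℝ) < N := by exact_mod_cast hN
  have translation_nonneg : 0 ≤ N * ∑ i, that i ^ 2 := by positivity
  have pose_error_le : frobSq ((Rhat - 1) * Xstar) + N * ∑ i, that i ^ 2 ≤ (2 * ε) ^ 2 := by
    rw [procrustesCost_one_zero] at hcost
    refine (frobSq_sub_one_mul_add_le Xhat hcentered hRhat that).trans ?_
    have cost_nonneg := procrustesCost_nonneg Xhat Xstar Rhat that
    exact pow_le_pow_left₀ (add_nonneg cost_nonneg (frobNorm_nonneg _)) (by linarith) 2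
  refine ⟨by linarith, sqrt_le_div_sqrt hε hs ?_, sqrt_le_div_sqrt hε hN_pos ?_⟩
  · linarith [mul_frobSq_le_frobSq_mul hgram (Rhat - 1)]
  · linarith [frobSq_nonneg ((Rhat - 1) * Xstar)]

end Procrustes

/-- **Lipschitz contracting property of the Procrustes operator (Property 1), with explicit
constants.** Let `X*` be a centered 3×N ground-truth point cloud with Gram matrix bounded
below by `s > 0`, and let `X̂` be within `ε` of `X*` in Frobenius norm. If `(R̂, t̂) ∈ SE(3)`
minimizes the Procrustes objective `(R, t) ↦ ‖R·X̂ + t𝟙ᵀ − X*‖_F`, then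
`‖(R̂ − I)·X*‖_F² + N·‖t̂‖² ≤ 4ε²`, hence `‖R̂ − I‖_F ≤ 2ε/√s` and `‖t̂‖ ≤ 2ε/√N`. -/
theorem procrustes_lipschitz_contracting {N : ℕ} (hN : 1 ≤ N)
    (Xstar Xhat : Matrix (Fin 3) (Fin N) ℝ)
    (hcentered : ∀ i, ∑ j, Xstar i j = 0)
    (ε : ℝ) (hε : 0 ≤ ε)
    (hclose : frobNorm (Xhat - Xstar) ≤ ε)
    (s : ℝ) (hs : 0 < s)
    (hgram : ∀ v : Fin 3 → ℝ, s * ∑ i, (v i) ^ 2 ≤ v ⬝ᵥ (Xstar * Xstarᵀ).mulVec v)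
    (Rhat : Matrix (Fin 3) (Fin 3) ℝ) (that : Fin 3 → ℝ)
    (hRhat : Rhatᵀ * Rhat = 1) (hdet : Rhat.det = 1)
    (hmin : ∀ (R : Matrix (Fin 3) (Fin 3) ℝ) (t : Fin 3 → ℝ),
      Rᵀ * R = 1 → R.det = 1 →
        frobNorm (Rhat * Xhat + (Matrix.of fun i _ => that i) - Xstar)
          ≤ frobNorm (R * Xhat + (Matrix.of fun i _ => t i) - Xstar)) :
    frobSq ((Rhat - 1) * Xstar) + N * ∑ i, (that i) ^ 2 ≤ 4 * ε ^ 2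
      ∧ frobNorm (Rhat - 1) ≤ 2 * ε / Real.sqrt s
      ∧ Real.sqrt (∑ i, (that i) ^ 2) ≤ 2 * ε / Real.sqrt N :=
  procrustes_lipschitz_contracting_general hN
    (funext fun i => (dotProduct_one _).trans (hcentered i)) hclose hs hgram hRhat
    (hmin 1 0 (by simp) (by simp))
end
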